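/- arXiv:1906.04477 — 2 statements merged into one kernel-verified Lean document; each statement's English description precedes it below -/
import Mathlib

section
/- (Proposition 1, forward direction and equality of optimal values.) Let d : ℕ, let S be a score function on binary adjacency matrices of size d, let S* be the minimum of S over acyclic binary adjacency matrices, and let hmin > 0 satisfy hmin ≤ h(A) for every non-acyclic binary adjacency matrix A. Assume S_L ∈ ℝ satisfies S_L ≤ S(A) for every binary adjacency matrix A, S_U ∈ ℝ satisfies S* ≤ S_U, and the penalty weights satisfy λ1 ≥ 0, λ2 ≥ 0 and λ1 + λ2·hmin ≥ S_U − S_L. Then every acyclic binary adjacency matrix A₀ with S(A₀) = S* minimizes the penalized objective F over all binary adjacency matrices, and the minimum of F over all binary adjacency matrices equals S*. -/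
/-!
A nonzero entry `(i, j)` of `A ^ n`, `n ≥ 1`, forces a path from `i` to `j` in the graph of `A`, so
when that graph is acyclic all positive powers of `A` have zero diagonal and only the constant term
of the exponential series contributes to `trace (exp A)`. Hence both penalties vanish on DAGs, while
on a cyclic graph they add at least `λ₁ + λ₂ hmin`, which makes up for any gain `S* - S(A)` in the
score.
-/

/-- A binary adjacency matrix: every entry is 0 or 1. -/
def IsBinary {d : ℕ} (A : Matrix (Fin d) (Fin d) ℝ) : Prop :=
  ∀ i j, A i j = 0 ∨ A i j = 1

/-- The directed graph induced by `A` (edge `i → j` iff `A i j = 1`) is acyclic. -/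
def IsAcyclicMat {d : ℕ} (A : Matrix (Fin d) (Fin d) ℝ) : Prop :=
  Irreflexive (Relation.TransGen (fun i j => A i j = 1))

/-- The smooth acyclicity function `h(A) = trace (exp A) - d`. -/
noncomputable def hAcyc {d : ℕ} (A : Matrix (Fin d) (Fin d) ℝ) : ℝ :=
  Matrix.trace (NormedSpace.exp A) - d

open Classical in
/-- The penalized objective `F(A) = S(A) + λ₁·1[A ∉ DAGs] + λ₂·h(A)`. -/
noncomputable def penObj {d : ℕ} (S : Matrix (Fin d) (Fin d) ℝ → ℝ) (lam1 lam2 : ℝ)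
    (A : Matrix (Fin d) (Fin d) ℝ) : ℝ :=
  S A + lam1 * (if IsAcyclicMat A then (0 : ℝ) else 1) + lam2 * hAcyc A

namespace PenalizedScore

section AcyclicMatrix

variable {m R 𝔸 : Type*} [Fintype m] [DecidableEq m]

theorem transGen_of_pow_succ_apply_ne_zero [Semiring R] {A : Matrix m m R} {n : ℕ} {i j : m}
    (hij : (A ^ (n + 1)) i j ≠ 0) : Relation.TransGen (fun i j => A i j ≠ 0) i j := by
  induction n generalizing j with
  | zero => exact .single (by rwa [zero_add, pow_one] at hij)
  | succ n ih =>
    rw [pow_succ, Matrix.mul_apply] at hij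
    obtain ⟨k, -, hk⟩ := Finset.exists_ne_zero_of_sum_ne_zero hij
    exact .tail (ih (left_ne_zero_of_mul hk)) (right_ne_zero_of_mul hk)

theorem trace_pow_eq_zero_of_acyclic [Semiring R] {A : Matrix m m R}
    (hA : ∀ i, ¬ Relation.TransGen (fun i j => A i j ≠ 0) i i) {n : ℕ} (hn : n ≠ 0) :
    (A ^ n).trace = 0 := by
  obtain ⟨k, rfl⟩ := Nat.exists_eq_succ_of_ne_zero hn
  exact Finset.sum_eq_zero fun i _ =>
    by_contra fun hi => hA i (transGen_of_pow_succ_apply_ne_zero hi)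

attribute [local instance] Matrix.linftyOpNormedRing Matrix.linftyOpNormedAlgebra in
theorem trace_exp_eq_card_of_trace_pow_eq_zero [NormedRing 𝔸] [NormedAlgebra ℚ 𝔸]
    [CompleteSpace 𝔸] {A : Matrix m m 𝔸} (hA : ∀ n ≠ 0, (A ^ n).trace = 0) :
    (NormedSpace.exp A).trace = Fintype.card m := by
  -- The metric uniformity on matrices is the entrywise one only up to unfolding of the norm.
  have : @CompleteSpace (Matrix m m 𝔸) PseudoMetricSpace.toUniformSpace :=
    inferInstanceAs (CompleteSpace (m → m → 𝔸))
  have hasSum_exp : HasSum (fun n : ℕ => ((n.factorial : ℚ)⁻¹ • A ^ n).trace)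
      (NormedSpace.exp A).trace :=
    (NormedSpace.exp_series_hasSum_exp' (𝕂 := ℚ) A).map (Matrix.traceAddMonoidHom m 𝔸)
      continuous_id.matrix_trace
  have hasSum_zeroth : HasSum (fun n : ℕ => ((n.factorial : ℚ)⁻¹ • A ^ n).trace)
      (((Nat.factorial 0 : ℚ)⁻¹ • A ^ 0).trace) :=
    hasSum_single 0 fun n hn => by rw [Matrix.trace_smul, hA n hn, smul_zero]
  simpa using hasSum_exp.unique hasSum_zeroth

end AcyclicMatrix

theorem isLeast_image_of_eqOn_of_le {α β : Type*} [Preorder β] {X C : Set α} {f F : α → β} {b : β}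
    (hCX : C ⊆ X) (hf : IsLeast (f '' C) b) (hfF : Set.EqOn F f C) (hF : ∀ x ∈ X \ C, b ≤ F x) :
    IsLeast (F '' X) b := by
  rw [← hfF.image_eq] at hf
  refine ⟨Set.image_mono hCX hf.1, Set.forall_mem_image.mpr fun x hx => ?_⟩
  by_cases hxC : x ∈ C
  · exact hf.2 (Set.mem_image_of_mem F hxC)
  · exact hF x ⟨hx, hxC⟩

variable {d : ℕ} {S : Matrix (Fin d) (Fin d) ℝ → ℝ} {A : Matrix (Fin d) (Fin d) ℝ}
  {SL hmin lam1 lam2 : ℝ}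

theorem hAcyc_eq_zero (hA : IsBinary A) (hac : IsAcyclicMat A) : hAcyc A = 0 := by
  have no_cycle (i) : ¬ Relation.TransGen (fun i j => A i j ≠ 0) i i := fun hi =>
    hac i (Relation.TransGen.mono (fun i j hij => (hA i j).resolve_left hij) i i hi)
  rw [hAcyc, trace_exp_eq_card_of_trace_pow_eq_zero
    fun _ hn => trace_pow_eq_zero_of_acyclic no_cycle hn, Fintype.card_fin, sub_self]

theorem penObj_eq_score (hA : IsBinary A) (hac : IsAcyclicMat A) :
    penObj S lam1 lam2 A = S A := by
  rw [penObj, if_pos hac, hAcyc_eq_zero hA hac, mul_zero, mul_zero, add_zero, add_zero]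

theorem le_penObj_of_not_acyclic (hac : ¬ IsAcyclicMat A) (hSL : SL ≤ S A)
    (hmin_le : hmin ≤ hAcyc A) (hl2 : 0 ≤ lam2) :
    SL + (lam1 + lam2 * hmin) ≤ penObj S lam1 lam2 A := by
  rw [penObj, if_neg hac, mul_one, ← add_assoc]
  gcongr

end PenalizedScore

open PenalizedScore

theorem prop1_forward_general (d : ℕ) (S : Matrix (Fin d) (Fin d) ℝ → ℝ)
    (Sstar SL SU hmin lam1 lam2 : ℝ)
    (hSstar : IsLeast {s : ℝ | ∃ A : Matrix (Fin d) (Fin d) ℝ,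
        IsBinary A ∧ IsAcyclicMat A ∧ S A = s} Sstar)
    (hminle : ∀ A : Matrix (Fin d) (Fin d) ℝ, IsBinary A → ¬ IsAcyclicMat A → hmin ≤ hAcyc A)
    (hSL : ∀ A : Matrix (Fin d) (Fin d) ℝ, IsBinary A → ¬ IsAcyclicMat A → SL ≤ S A)
    (hSU : Sstar ≤ SU)
    (hl2 : 0 ≤ lam2)
    (hpen : SU - SL ≤ lam1 + lam2 * hmin) :
    (∀ A₀ : Matrix (Fin d) (Fin d) ℝ, IsBinary A₀ → IsAcyclicMat A₀ → S A₀ = Sstar →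
      ∀ A : Matrix (Fin d) (Fin d) ℝ, IsBinary A →
        penObj S lam1 lam2 A₀ ≤ penObj S lam1 lam2 A) ∧
    IsLeast {v : ℝ | ∃ A : Matrix (Fin d) (Fin d) ℝ,
        IsBinary A ∧ penObj S lam1 lam2 A = v} Sstar := by
  have hS : IsLeast (S '' {A | IsBinary A ∧ IsAcyclicMat A}) Sstar := by
    simpa only [Set.image, Set.mem_ofPred_eq, and_assoc] using hSstar
  have hcyclic : ∀ A ∈ {A | IsBinary A} \ {A | IsBinary A ∧ IsAcyclicMat A},
      Sstar ≤ penObj S lam1 lam2 A := by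
    rintro A ⟨hA, hA'⟩
    have hac : ¬ IsAcyclicMat A := fun hac => hA' ⟨hA, hac⟩
    calc Sstar ≤ SL + (lam1 + lam2 * hmin) := by linarith
      _ ≤ penObj S lam1 lam2 A :=
        le_penObj_of_not_acyclic hac (hSL A hA hac) (hminle A hA hac) hl2
  have hF : IsLeast (penObj S lam1 lam2 '' {A | IsBinary A}) Sstar :=
    isLeast_image_of_eqOn_of_le (fun _ hA => hA.1) hS (fun _ hA => penObj_eq_score hA.1 hA.2)
      hcyclic
  refine ⟨fun A₀ hA₀ hac hSA₀ A hA => ?_, hF⟩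
  rw [penObj_eq_score hA₀ hac, hSA₀]
  exact hF.2 ⟨A, hA, rfl⟩

theorem prop1_forward (d : ℕ) (S : Matrix (Fin d) (Fin d) ℝ → ℝ)
    (Sstar SL SU hmin lam1 lam2 : ℝ)
    (hSstar : IsLeast {s : ℝ | ∃ A : Matrix (Fin d) (Fin d) ℝ,
        IsBinary A ∧ IsAcyclicMat A ∧ S A = s} Sstar)
    (hminpos : 0 < hmin)
    (hminle : ∀ A : Matrix (Fin d) (Fin d) ℝ, IsBinary A → ¬ IsAcyclicMat A → hmin ≤ hAcyc A)
    (hSL : ∀ A : Matrix (Fin d) (Fin d) ℝ, IsBinary A → SL ≤ S A)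
    (hSU : Sstar ≤ SU)
    (hl1 : 0 ≤ lam1) (hl2 : 0 ≤ lam2)
    (hpen : SU - SL ≤ lam1 + lam2 * hmin) :
    (∀ A₀ : Matrix (Fin d) (Fin d) ℝ, IsBinary A₀ → IsAcyclicMat A₀ → S A₀ = Sstar →
      ∀ A : Matrix (Fin d) (Fin d) ℝ, IsBinary A →
        penObj S lam1 lam2 A₀ ≤ penObj S lam1 lam2 A) ∧
    IsLeast {v : ℝ | ∃ A : Matrix (Fin d) (Fin d) ℝ,
        IsBinary A ∧ penObj S lam1 lam2 A = v} Sstar :=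
  prop1_forward_general d S Sstar SL SU hmin lam1 lam2 hSstar hminle (fun A hA _ => hSL A hA)
    hSU hl2 hpen
end

section
/- (Proposition 1, reverse direction under strict inequality.) Let d : ℕ, let S be a score function on binary adjacency matrices of size d, let S* be the minimum of S over acyclic binary adjacency matrices, and let hmin > 0 satisfy hmin ≤ h(A) for every non-acyclic binary adjacency matrix A. Assume S_L ≤ S(A) for every binary adjacency matrix A, S* ≤ S_U, λ1 ≥ 0, λ2 ≥ 0 and λ1 + λ2·hmin > S_U − S_L. Then every binary adjacency matrix A that minimizes the penalized objective F over all binary adjacency matrices is acyclic and satisfies S(A) = S*. -/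
/-!
The trace of `A ^ k` only sees closed walks of length `k`, so on acyclic matrices every positive
power has trace zero and the exponential series gives `h(A) = 0`: there `F` agrees with `S`, and `F`
attains the value `S*`. A cyclic matrix costs at least `S_L + λ₁ + λ₂ hmin > S_U ≥ S*`, so it cannot
minimize `F`, and among acyclic matrices minimizing `F` means minimizing `S`.
-/

section ExactPenalty

variable {α β : Type*} [PartialOrder β]

theorem mem_and_eq_of_isMinOn_of_eqOn {X Y : Set α} {S F : α → β} {m : β} {a : α}
    (hm : IsLeast (S '' (X ∩ Y)) m) (hFS : Set.EqOn F S (X ∩ Y)) (hgap : ∀ b ∈ X \ Y, m < F b)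
    (ha : a ∈ X) (hmin : IsMinOn F X a) : a ∈ Y ∧ S a = m := by
  obtain ⟨⟨b, ⟨hbX, hbY⟩, rfl⟩, hlower⟩ := hm
  have hFa : F a ≤ S b := (isMinOn_iff.1 hmin b hbX).trans_eq (hFS ⟨hbX, hbY⟩)
  have haY : a ∈ Y := by
    by_contra haY
    exact (hgap a ⟨ha, haY⟩).not_ge hFa
  exact ⟨haY, le_antisymm ((hFS ⟨ha, haY⟩).ge.trans hFa) (hlower ⟨a, ⟨ha, haY⟩, rfl⟩)⟩

end ExactPenalty

section MatrixPowers

variable {n R : Type*} [Fintype n] [DecidableEq n] [Semiring R] {A : Matrix n n R}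
  {r : n → n → Prop} {k : ℕ}

theorem transGen_of_pow_succ_apply_ne_zero (hA : ∀ i j, A i j ≠ 0 → r i j) {i j : n}
    (hij : (A ^ (k + 1)) i j ≠ 0) : Relation.TransGen r i j := by
  induction k generalizing j with
  | zero => exact .single (hA i j (by rwa [zero_add, pow_one] at hij))
  | succ k ih =>
    rw [pow_succ, Matrix.mul_apply] at hij
    obtain ⟨l, -, hl⟩ := Finset.exists_ne_zero_of_sum_ne_zero hij
    exact .tail (ih (left_ne_zero_of_mul hl)) (hA l j (right_ne_zero_of_mul hl))

theorem trace_pow_eq_zero_of_not_transGen (hA : ∀ i j, A i j ≠ 0 → r i j)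
    (hr : ∀ i, ¬ Relation.TransGen r i i) (hk : k ≠ 0) : (A ^ k).trace = 0 := by
  obtain ⟨k, rfl⟩ := Nat.exists_eq_succ_of_ne_zero hk
  exact Finset.sum_eq_zero fun i _ => by_contra fun hii =>
    hr i (transGen_of_pow_succ_apply_ne_zero hA hii)

end MatrixPowers

section TraceExp

open scoped Nat

variable {n 𝔸 : Type*} [Fintype n] [DecidableEq n] [NormedRing 𝔸] [NormedAlgebra ℚ 𝔸]
  [CompleteSpace 𝔸]

open scoped Matrix.Norms.Operator in
theorem hasSum_exp_matrix (A : Matrix n n 𝔸) :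
    HasSum (fun k : ℕ => (k !⁻¹ : ℚ) • A ^ k) (NormedSpace.exp A) := by
  -- The uniformity of the operator norm is the product one, but instance search does not see this.
  have : @CompleteSpace (Matrix n n 𝔸) PseudoMetricSpace.toUniformSpace :=
    inferInstanceAs (CompleteSpace (n → n → 𝔸))
  exact NormedSpace.exp_series_hasSum_exp' A

theorem hasSum_trace_exp (A : Matrix n n 𝔸) :
    HasSum (fun k : ℕ => (k !⁻¹ : ℚ) • (A ^ k).trace) (NormedSpace.exp A).trace := by
  simpa only [Function.comp_def, Matrix.traceAddMonoidHom_apply, Matrix.trace_smul] using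
    (hasSum_exp_matrix A).map (Matrix.traceAddMonoidHom n 𝔸) continuous_id.matrix_trace

theorem trace_exp_eq_card_of_trace_pow_eq_zero {A : Matrix n n 𝔸}
    (hA : ∀ k ≠ 0, (A ^ k).trace = 0) : (NormedSpace.exp A).trace = Fintype.card n := by
  have hsum := hasSum_single (f := fun k : ℕ => (k !⁻¹ : ℚ) • (A ^ k).trace) 0
    fun k hk => by rw [hA k hk, smul_zero]
  simpa using (hasSum_trace_exp A).unique hsum

end TraceExp

section PenalizedObjective

variable {d : ℕ} {A : Matrix (Fin d) (Fin d) ℝ}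

theorem IsAcyclicMat.hAcyc_eq_zero (hacyc : IsAcyclicMat A) (hA : IsBinary A) : hAcyc A = 0 := by
  have htrace : ∀ k ≠ 0, (A ^ k).trace = 0 := fun _ hk =>
    trace_pow_eq_zero_of_not_transGen (fun i j => (hA i j).resolve_left) hacyc hk
  rw [hAcyc, trace_exp_eq_card_of_trace_pow_eq_zero htrace, Fintype.card_fin, sub_self]

variable (S : Matrix (Fin d) (Fin d) ℝ → ℝ) (lam1 lam2 : ℝ)

theorem penObj_of_isAcyclicMat (hA : IsBinary A) (hacyc : IsAcyclicMat A) :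
    penObj S lam1 lam2 A = S A := by
  rw [penObj, if_pos hacyc, hacyc.hAcyc_eq_zero hA, mul_zero, mul_zero, add_zero, add_zero]

theorem penObj_of_not_isAcyclicMat (hcyc : ¬ IsAcyclicMat A) :
    penObj S lam1 lam2 A = S A + lam1 + lam2 * hAcyc A := by
  rw [penObj, if_neg hcyc, mul_one]

end PenalizedObjective

theorem prop1_reverse_general {d : ℕ} {S : Matrix (Fin d) (Fin d) ℝ → ℝ} {Sstar lam1 lam2 : ℝ}
    (hSstar : IsLeast {s : ℝ | ∃ A : Matrix (Fin d) (Fin d) ℝ,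
        IsBinary A ∧ IsAcyclicMat A ∧ S A = s} Sstar)
    (hgap : ∀ A : Matrix (Fin d) (Fin d) ℝ, IsBinary A → ¬ IsAcyclicMat A →
      Sstar < S A + lam1 + lam2 * hAcyc A)
    {A : Matrix (Fin d) (Fin d) ℝ} (hA : IsBinary A)
    (hmin : ∀ A' : Matrix (Fin d) (Fin d) ℝ, IsBinary A' →
      penObj S lam1 lam2 A ≤ penObj S lam1 lam2 A') :
    IsAcyclicMat A ∧ S A = Sstar := by
  refine mem_and_eq_of_isMinOn_of_eqOn (X := {B | IsBinary B}) (Y := {B | IsAcyclicMat B})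
    (F := penObj S lam1 lam2) ?_ ?_ ?_ hA (isMinOn_iff.2 hmin)
  · simpa only [Set.image, Set.mem_inter_iff, Set.mem_ofPred_eq, and_assoc] using hSstar
  · exact fun B hB => penObj_of_isAcyclicMat S lam1 lam2 hB.1 hB.2
  · rintro B ⟨hB, hcyc⟩
    exact (hgap B hB hcyc).trans_eq (penObj_of_not_isAcyclicMat S lam1 lam2 hcyc).symm

theorem prop1_reverse (d : ℕ) (S : Matrix (Fin d) (Fin d) ℝ → ℝ)
    (Sstar SL SU hmin lam1 lam2 : ℝ)
    (hSstar : IsLeast {s : ℝ | ∃ A : Matrix (Fin d) (Fin d) ℝ,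
        IsBinary A ∧ IsAcyclicMat A ∧ S A = s} Sstar)
    (hminpos : 0 < hmin)
    (hminle : ∀ A : Matrix (Fin d) (Fin d) ℝ, IsBinary A → ¬ IsAcyclicMat A → hmin ≤ hAcyc A)
    (hSL : ∀ A : Matrix (Fin d) (Fin d) ℝ, IsBinary A → SL ≤ S A)
    (hSU : Sstar ≤ SU)
    (hl1 : 0 ≤ lam1) (hl2 : 0 ≤ lam2)
    (hpen : SU - SL < lam1 + lam2 * hmin) :
    ∀ A : Matrix (Fin d) (Fin d) ℝ, IsBinary A →
      (∀ A' : Matrix (Fin d) (Fin d) ℝ, IsBinary A' →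
        penObj S lam1 lam2 A ≤ penObj S lam1 lam2 A') →
      IsAcyclicMat A ∧ S A = Sstar :=
  fun A hA hmin => prop1_reverse_general hSstar (fun B hB hcyc => by
    linarith [hSL B hB, mul_le_mul_of_nonneg_left (hminle B hB hcyc) hl2]) hA hmin
end
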